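/- arXiv:1409.8444 — 7 statements merged into one kernel-verified Lean document; each statement's English description precedes it below -/
import Mathlib

section
/- Suppose the step-size parameter γ > 0 satisfies (1 + γL)² + (5γl)/2 − 3/2 < 0 and let (yᵗ, zᵗ, xᵗ) be generated by the DR splitting method. Then: (i) the sequence t ↦ D_γ(yᵗ, zᵗ, xᵗ) is nonincreasing for t ≥ 1; (ii) if the sequence (yᵗ, zᵗ, xᵗ) has a cluster point, then ‖yᵗ⁺¹ − yᵗ‖ → 0, ‖xᵗ⁺¹ − xᵗ‖ → 0 and ‖zᵗ⁺¹ − yᵗ⁺¹‖ → 0 as t → ∞; (iii) every cluster point (y*, z*, x*) of the sequence satisfies y* = z*, and along any subsequence (y^{t_j}, z^{t_j}, x^{t_j}) converging to (y*, z*, x*) one has g(z^{t_j}) → g(z*). -/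
open Filter Topology

theorem aux_line {n : ℕ} (f : EuclideanSpace ℝ (Fin n) → ℝ) (v a d p : EuclideanSpace ℝ (Fin n))
    (c : ℝ) (h : HasGradientAt f v a) :
    HasDerivAt (fun s : ℝ => f (a + s • d) + c * ‖a + s • d - p‖ ^ 2)
      (inner ℝ v d + c * (2 * inner ℝ (a - p) d)) 0 := by
  have hl : HasDerivAt (fun s : ℝ => a + s • d) d 0 := by
    simpa using ((hasDerivAt_id (0:ℝ)).smul_const d).const_add a
  have h1 : HasDerivAt (fun s : ℝ => f (a + s • d)) (inner ℝ v d) 0 := by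
    have h0 : HasFDerivAt f (InnerProductSpace.toDual ℝ _ v) (a + (0:ℝ) • d) := by
      simpa using h.hasFDerivAt
    have h1 := h0.comp_hasDerivAt (0:ℝ) hl
    rw [InnerProductSpace.toDual_apply_apply] at h1
    exact h1
  have h2 := (hl.sub_const p).norm_sq
  simp only [zero_smul, add_zero] at h2
  exact h1.add (h2.const_mul c)

theorem aux_conv {n : ℕ} (f : EuclideanSpace ℝ (Fin n) → ℝ) (v a b : EuclideanSpace ℝ (Fin n))
    (l : ℝ) (hc : ConvexOn ℝ Set.univ (fun w => f w + l / 2 * ‖w‖ ^ 2))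
    (h : HasGradientAt f v a) :
    f a + inner ℝ v (b - a) - l / 2 * ‖b - a‖ ^ 2 ≤ f b := by
  have h1 := aux_line f v a (b - a) 0 (l / 2) h
  have hc' : ConvexOn ℝ Set.univ
      (fun s : ℝ => f (a + s • (b - a)) + l / 2 * ‖a + s • (b - a) - 0‖ ^ 2) := by
    refine ⟨convex_univ, fun s _ t _ α β hα hβ hαβ => ?_⟩
    have := hc.2 (Set.mem_univ (a + s • (b - a))) (Set.mem_univ (a + t • (b - a))) hα hβ hαβ
    have e : α • (a + s • (b - a)) + β • (a + t • (b - a))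
        = a + (α • s + β • t) • (b - a) := by
      have : a = (α + β) • a := by rw [hαβ, one_smul]
      rw [smul_add, smul_add, smul_eq_mul, smul_eq_mul, add_smul, smul_smul, smul_smul]
      nth_rewrite 5 [this]
      rw [add_smul]; abel
    simp only [e] at this
    simpa using this
  have h2 := hc'.le_slope_of_hasDerivAt (Set.mem_univ 0) (Set.mem_univ 1) one_pos h1
  simp only [slope_def_field, one_smul, zero_smul, add_sub_cancel, sub_zero, add_zero] at h2
  have e : ‖b‖ ^ 2 = ‖a‖ ^ 2 + 2 * inner ℝ a (b - a) + ‖b - a‖ ^ 2 := by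
    rw [← norm_add_sq_real]; simp
  rw [e] at h2
  linarith

theorem aux_opt {n : ℕ} (f : EuclideanSpace ℝ (Fin n) → ℝ) (v a p : EuclideanSpace ℝ (Fin n))
    (γ : ℝ) (hγ : 0 < γ) (h : HasGradientAt f v a)
    (hm : ∀ w, f a + 1 / (2 * γ) * ‖a - p‖ ^ 2 ≤ f w + 1 / (2 * γ) * ‖w - p‖ ^ 2) :
    p = a + γ • v := by
  have h1 := aux_line f v a (γ • v + (a - p)) p (1 / (2 * γ)) h
  have h2 : IsLocalMin (fun s : ℝ => f (a + s • (γ • v + (a - p))) + 1 / (2 * γ) * ‖a + s • (γ • v + (a - p)) - p‖ ^ 2) 0 := by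
    apply Filter.Eventually.of_forall
    intro s
    simpa using hm (a + s • (γ • v + (a - p)))
  have h3 := h2.hasDerivAt_eq_zero h1
  have h4 : inner ℝ (γ • v + (a - p)) (γ • v + (a - p)) = 0 := by
    rw [inner_add_left, real_inner_smul_left]
    field_simp at h3
    linarith
  have h5 := inner_self_eq_zero.mp h4
  have : p - (a + γ • v) = 0 := by
    rw [← neg_eq_zero, ← h5]; abel
  exact sub_eq_zero.mp this

/-- one-step decrease of the merit function -/
theorem aux_step {n : ℕ} (f : EuclideanSpace ℝ (Fin n) → ℝ)
    (L l γ : ℝ) (hL : 0 < L) (hγ : 0 < γ)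
    (x0 x1 x2 y1 y2 z1 z2 v1 v2 : EuclideanSpace ℝ (Fin n)) (g1 g2 : ℝ)
    (hv : ‖v2 - v1‖ ≤ L * ‖y2 - y1‖)
    (c12 : f y1 + inner ℝ v1 (y2 - y1) - l / 2 * ‖y2 - y1‖ ^ 2 ≤ f y2)
    (c21 : f y2 + inner ℝ v2 (y1 - y2) - l / 2 * ‖y1 - y2‖ ^ 2 ≤ f y1)
    (o1 : x0 = y1 + γ • v1) (o2 : x1 = y2 + γ • v2)
    (e1 : x1 = x0 + (z1 - y1)) (e2 : x2 = x1 + (z2 - y2))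
    (hz : g2 + 1 / (2 * γ) * ‖(2 : ℝ) • y2 - x1 - z2‖ ^ 2
        ≤ g1 + 1 / (2 * γ) * ‖(2 : ℝ) • y2 - x1 - z1‖ ^ 2) :
    f y2 + g2 + (-(1 / (2 * γ)) * ‖y2 - z2‖ ^ 2 + 1 / γ * inner ℝ (x2 - y2) (z2 - y2))
    + (-((1 + γ * L) ^ 2 + 5 * γ * l / 2 - 3 / 2) / γ) * ‖y2 - y1‖ ^ 2
    ≤ f y1 + g1 + (-(1 / (2 * γ)) * ‖y1 - z1‖ ^ 2 + 1 / γ * inner ℝ (x1 - y1) (z1 - y1)) := by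
  obtain ⟨q, rfl⟩ : ∃ q, y2 = y1 + q := ⟨y2 - y1, by abel⟩
  obtain ⟨d, rfl⟩ : ∃ d, v2 = v1 + d := ⟨v2 - v1, by abel⟩
  obtain ⟨r, rfl⟩ : ∃ r, z2 = y1 + q + r := ⟨z2 - (y1 + q), by abel⟩
  have hz1 : z1 = y1 + q + γ • d := by
    have : z1 = x1 - x0 + y1 := by rw [e1]; abel
    rw [this, o1, o2, smul_add]; abel
  have n1 : (2 : ℝ) • (y1 + q) - x1 - (y1 + q + r) = - (γ • v1 + γ • d + r) := by
    rw [o2, two_smul, smul_add]; abel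
  have n2 : (2 : ℝ) • (y1 + q) - x1 - z1 = - (γ • v1 + γ • d + γ • d) := by
    rw [o2, hz1, two_smul, smul_add]; abel
  have n3 : x2 - (y1 + q) = γ • v1 + γ • d + r := by
    rw [e2, o2, smul_add]; abel
  have n4 : x1 - y1 = γ • v1 + (q + γ • d) := by rw [o2, smul_add]; abel
  have n5 : z1 - y1 = q + γ • d := by rw [hz1]; abel
  have n6 : y1 - z1 = - (q + γ • d) := by rw [hz1]; abel
  have n7 : y1 + q - (y1 + q + r) = - r := by abel
  have n8 : y1 + q + r - (y1 + q) = r := by abel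
  have n9 : y1 - (y1 + q) = - q := by abel
  rw [n1, n2, norm_neg, norm_neg] at hz
  rw [n3, n4, n5, n6, n7, n8]
  rw [n9] at c21
  simp only [add_sub_cancel_left, norm_neg, inner_neg_right, inner_add_left] at c12 c21 hv ⊢
  have hd : ‖d‖ ^ 2 ≤ L ^ 2 * ‖q‖ ^ 2 := by
    rw [← mul_pow]; gcongr
  have hqd : inner ℝ q d ≤ L * ‖q‖ ^ 2 := by
    have := real_inner_le_norm q d
    nlinarith [norm_nonneg q]
  simp only [← real_inner_self_eq_norm_sq, inner_add_left, inner_add_right, real_inner_smul_left, real_inner_smul_right] at *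
  simp only [real_inner_comm v1 d, real_inner_comm v1 r, real_inner_comm d r,
    real_inner_comm q d] at *
  generalize f (y1 + q) = F2 at *
  generalize f y1 = F1 at *
  generalize inner ℝ q q = qq at *
  generalize inner ℝ d d = dd at *
  generalize inner ℝ r r = rr at *
  generalize inner ℝ v1 v1 = vv at *
  generalize inner ℝ v1 q = vq at *
  generalize inner ℝ v1 d = vd at *
  generalize inner ℝ v1 r = vr at *
  generalize inner ℝ q d = qd at *
  generalize inner ℝ d r = dr at *
  have h1 := mul_le_mul_of_nonneg_left hd hγ.le
  rw [← sub_nonneg] at hz c12 c21 hqd h1 ⊢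
  have key := add_nonneg (add_nonneg (add_nonneg hz (mul_nonneg (zero_le_three (α := ℝ)) c21))
    (mul_nonneg (zero_le_two (α := ℝ)) c12)) (add_nonneg (mul_nonneg (zero_le_two (α := ℝ)) hqd) h1)
  refine key.trans (le_of_eq ?_)
  field_simp
  ring

theorem stmt0 {n : ℕ}
    (f : EuclideanSpace ℝ (Fin n) → ℝ)
    (f' : EuclideanSpace ℝ (Fin n) → EuclideanSpace ℝ (Fin n))
    (L l : ℝ) (hL : 0 < L)
    (hgrad : ∀ w, HasGradientAt f (f' w) w)
    (hlip : LipschitzWith L.toNNReal f')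
    (hconv : ConvexOn ℝ Set.univ (fun w => f w + l / 2 * ‖w‖ ^ 2))
    (g : EuclideanSpace ℝ (Fin n) → EReal)
    (hg_proper : ∃ w, g w ≠ ⊤) (hg_ne_bot : ∀ w, g w ≠ ⊥)
    (hg_lsc : LowerSemicontinuous g)
    (γ : ℝ) (hγ : 0 < γ)
    (hstep : (1 + γ * L) ^ 2 + 5 * γ * l / 2 - 3 / 2 < 0)
    (x y z : ℕ → EuclideanSpace ℝ (Fin n))
    (hy : ∀ t, ∀ w, f (y (t + 1)) + 1 / (2 * γ) * ‖y (t + 1) - x t‖ ^ 2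
        ≤ f w + 1 / (2 * γ) * ‖w - x t‖ ^ 2)
    (hz : ∀ t, ∀ w, g (z (t + 1))
          + ((1 / (2 * γ) * ‖(2 : ℝ) • y (t + 1) - x t - z (t + 1)‖ ^ 2 : ℝ) : EReal)
        ≤ g w + ((1 / (2 * γ) * ‖(2 : ℝ) • y (t + 1) - x t - w‖ ^ 2 : ℝ) : EReal))
    (hx : ∀ t, x (t + 1) = x t + (z (t + 1) - y (t + 1)))
    (D : EuclideanSpace ℝ (Fin n) → EuclideanSpace ℝ (Fin n) → EuclideanSpace ℝ (Fin n) → EReal)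
    (hD : ∀ a b c, D a b c
        = (f a : EReal) + g b
          + ((-(1 / (2 * γ)) * ‖a - b‖ ^ 2 + 1 / γ * (inner ℝ (c - a) (b - a) : ℝ) : ℝ) : EReal)) :
    (∀ t, 1 ≤ t → D (y (t + 1)) (z (t + 1)) (x (t + 1)) ≤ D (y t) (z t) (x t)) ∧
    ((∃ p : EuclideanSpace ℝ (Fin n) × EuclideanSpace ℝ (Fin n) × EuclideanSpace ℝ (Fin n),
        MapClusterPt p atTop (fun t => (y t, z t, x t))) →
      Tendsto (fun t => ‖y (t + 1) - y t‖) atTop (nhds 0) ∧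
      Tendsto (fun t => ‖x (t + 1) - x t‖) atTop (nhds 0) ∧
      Tendsto (fun t => ‖z (t + 1) - y (t + 1)‖) atTop (nhds 0)) ∧
    (∀ ys zs xs, MapClusterPt (ys, zs, xs) atTop (fun t => (y t, z t, x t)) →
      ys = zs ∧
      ∀ φ : ℕ → ℕ, StrictMono φ →
        Tendsto (fun j => (y (φ j), z (φ j), x (φ j))) atTop (nhds (ys, zs, xs)) →
        Tendsto (fun j => g (z (φ j))) atTop (nhds (g zs))) := by
  set c : ℝ := -((1 + γ * L) ^ 2 + 5 * γ * l / 2 - 3 / 2) / γ with hc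
  have hcpos : 0 < c := div_pos (by linarith) hγ
  -- finiteness of g along the iterates
  have hfin : ∀ t, g (z (t + 1)) = ((g (z (t + 1))).toReal : EReal) := by
    intro t
    refine (EReal.coe_toReal ?_ (hg_ne_bot _)).symm
    intro htop
    obtain ⟨w, hw⟩ := hg_proper
    have h1 := hz t w
    rw [htop, EReal.top_add_coe, top_le_iff, ← EReal.coe_toReal hw (hg_ne_bot w),
      ← EReal.coe_add] at h1
    exact EReal.coe_ne_top _ h1
  have hfin' : ∀ t, ∃ r : ℝ, g (z (t + 1)) = (r : EReal) := fun t => ⟨_, hfin t⟩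
  choose G hG using hfin'
  let R : EuclideanSpace ℝ (Fin n) × EuclideanSpace ℝ (Fin n) × EuclideanSpace ℝ (Fin n) → ℝ :=
    fun p => f p.1 + (-(1 / (2 * γ)) * ‖p.1 - p.2.1‖ ^ 2
      + 1 / γ * (inner ℝ (p.2.2 - p.1) (p.2.1 - p.1) : ℝ))
  let S : ℕ → ℝ := fun t => f (y (t + 1)) + G t + (-(1 / (2 * γ)) * ‖y (t + 1) - z (t + 1)‖ ^ 2
      + 1 / γ * (inner ℝ (x (t + 1) - y (t + 1)) (z (t + 1) - y (t + 1)) : ℝ))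
  have hDS : ∀ t, D (y (t + 1)) (z (t + 1)) (x (t + 1)) = (S t : EReal) := by
    intro t
    rw [hD, hG, ← EReal.coe_add, ← EReal.coe_add]
  have hopt : ∀ t, x t = y (t + 1) + γ • f' (y (t + 1)) := fun t =>
    aux_opt f _ _ _ γ hγ (hgrad _) (hy t)
  have hlip' : ∀ a b, ‖f' a - f' b‖ ≤ L * ‖a - b‖ := by
    intro a b
    have := hlip.norm_sub_le a b
    rwa [Real.coe_toNNReal _ hL.le] at this
  have hdec : ∀ t, S (t + 1) + c * ‖y (t + 2) - y (t + 1)‖ ^ 2 ≤ S t := by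
    intro t
    refine aux_step f L l γ hL hγ (x t) (x (t + 1)) (x (t + 2)) (y (t + 1)) (y (t + 2)) (z (t + 1))
      (z (t + 2)) (f' (y (t + 1))) (f' (y (t + 2))) (G t) (G (t + 1)) (hlip' _ _)
      (aux_conv f _ _ _ l hconv (hgrad _)) (aux_conv f _ _ _ l hconv (hgrad _))
      (hopt _) (hopt _) (hx _) (hx _) ?_
    have h1 := hz (t + 1) (z (t + 1))
    rw [hG, hG, ← EReal.coe_add, ← EReal.coe_add, EReal.coe_le_coe_iff] at h1
    exact h1
  have hanti : Antitone S := antitone_nat_of_succ_le fun t => by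
    have := hdec t
    have h2 : 0 ≤ c * ‖y (t + 2) - y (t + 1)‖ ^ 2 := by positivity
    linarith
  have hfc : Continuous f := continuous_iff_continuousAt.mpr fun w =>
    (hgrad w).hasFDerivAt.continuousAt
  have hRc : Continuous R := by
    have := hfc.comp (continuous_fst : Continuous (Prod.fst : EuclideanSpace ℝ (Fin n) ×
      EuclideanSpace ℝ (Fin n) × EuclideanSpace ℝ (Fin n) → _))
    simp only [Function.comp_def] at this
    fun_prop
  have part2 : (∃ p : EuclideanSpace ℝ (Fin n) × EuclideanSpace ℝ (Fin n) ×
        EuclideanSpace ℝ (Fin n), MapClusterPt p atTop (fun t => (y t, z t, x t))) →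
      Tendsto (fun t => ‖y (t + 1) - y t‖) atTop (nhds 0) ∧
      Tendsto (fun t => ‖x (t + 1) - x t‖) atTop (nhds 0) ∧
      Tendsto (fun t => ‖z (t + 1) - y (t + 1)‖) atTop (nhds 0) := by
    rintro ⟨p, hp⟩
    obtain ⟨m, -, hm⟩ := EReal.lt_iff_exists_real_btwn.mp (bot_lt_iff_ne_bot.mpr (hg_ne_bot p.2.1))
    have ev1 : ∀ᶠ q in 𝓝 p, (m : EReal) < g q.2.1 := by
      have h1 : Tendsto (fun q : EuclideanSpace ℝ (Fin n) × EuclideanSpace ℝ (Fin n) ×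
        EuclideanSpace ℝ (Fin n) => q.2.1) (𝓝 p) (𝓝 p.2.1) :=
        (continuous_fst.comp continuous_snd).tendsto p
      exact h1.eventually (hg_lsc p.2.1 m hm)
    have ev2 : ∀ᶠ q in 𝓝 p, R p - 1 < R q :=
      (hRc.tendsto p).eventually (lt_mem_nhds (by linarith))
    have hfr := hp.frequently (ev1.and ev2)
    have hlow : ∀ t, m + (R p - 1) ≤ S t := by
      intro t
      obtain ⟨s, hs, h1, h2⟩ := (frequently_atTop.mp hfr) (t + 1)
      obtain ⟨k, rfl⟩ : ∃ k, s = k + 1 := ⟨s - 1, by omega⟩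
      have h3 : m < G k := by
        have h1' : (m : EReal) < g (z (k + 1)) := h1
        rw [hG] at h1'
        exact_mod_cast h1'
      have h4 : S k = G k + R (y (k + 1), z (k + 1), x (k + 1)) := by
        simp only [S, R]; ring
      have h5 := hanti (show t ≤ k by omega)
      have h2' : R p - 1 < R (y (k + 1), z (k + 1), x (k + 1)) := h2
      linarith
    have hlim := tendsto_atTop_ciInf hanti ⟨m + (R p - 1), by rintro _ ⟨t, rfl⟩; exact hlow t⟩
    have hdiff : Tendsto (fun t => (S t - S (t + 1)) / c) atTop (𝓝 0) := by
      have := (hlim.sub (hlim.comp (tendsto_add_atTop_nat 1))).div_const c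
      simpa using this
    have hsq : Tendsto (fun t => ‖y (t + 2) - y (t + 1)‖ ^ 2) atTop (𝓝 0) := by
      refine squeeze_zero (fun t => by positivity) (fun t => ?_) hdiff
      rw [le_div_iff₀ hcpos]
      have := hdec t
      linarith
    have hy1 : Tendsto (fun t => ‖y (t + 2) - y (t + 1)‖) atTop (𝓝 0) := by
      have := hsq.sqrt
      simpa using this
    have hx1 : Tendsto (fun t => ‖x (t + 1) - x t‖) atTop (𝓝 0) := by
      have h0 : Tendsto (fun t => (1 + γ * L) * ‖y (t + 2) - y (t + 1)‖) atTop (𝓝 0) := by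
        simpa using hy1.const_mul (1 + γ * L)
      refine squeeze_zero (fun t => norm_nonneg _) (fun t => ?_) h0
      have e : x (t + 1) - x t = (y (t + 2) - y (t + 1))
          + γ • (f' (y (t + 2)) - f' (y (t + 1))) := by
        rw [hopt (t + 1), hopt t, smul_sub]; abel
      rw [e]
      refine (norm_add_le _ _).trans ?_
      rw [norm_smul, Real.norm_of_nonneg hγ.le]
      have := mul_le_mul_of_nonneg_left (hlip' (y (t + 2)) (y (t + 1))) hγ.le
      linarith
    refine ⟨(tendsto_add_atTop_iff_nat 1).mp hy1, hx1, ?_⟩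
    refine hx1.congr fun t => ?_
    rw [hx t]; simp
  refine ⟨?_, part2, ?_⟩
  · intro t ht
    obtain ⟨k, rfl⟩ : ∃ k, t = k + 1 := ⟨t - 1, by omega⟩
    rw [hDS, hDS, EReal.coe_le_coe_iff]
    exact hanti (Nat.le_succ k)
  · intro ys zs xs hcl
    obtain ⟨-, hxx, hzy⟩ := part2 ⟨_, hcl⟩
    constructor
    · have h1 : Tendsto (fun t => z t - y t) atTop (𝓝 0) :=
        (tendsto_add_atTop_iff_nat 1).mp (tendsto_zero_iff_norm_tendsto_zero.mpr hzy)
      have hcont : Continuous (fun q : EuclideanSpace ℝ (Fin n) × EuclideanSpace ℝ (Fin n) ×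
        EuclideanSpace ℝ (Fin n) => q.2.1 - q.1) := by fun_prop
      have h2 : MapClusterPt (zs - ys) atTop (fun t => z t - y t) :=
        hcl.continuousAt_comp hcont.continuousAt
      have h3 : zs - ys = 0 := by
        by_contra hne
        have := h2.clusterPt.mono h1
        exact hne (eq_of_nhds_neBot this)
      exact (sub_eq_zero.mp h3).symm
    · intro φ hφ hlim
      have hly : Tendsto (fun j => y (φ j)) atTop (𝓝 ys) := (continuous_fst.tendsto _).comp hlim
      have hlz : Tendsto (fun j => z (φ j)) atTop (𝓝 zs) :=
        ((continuous_fst.comp continuous_snd).tendsto _).comp hlim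
      have hlx : Tendsto (fun j => x (φ j)) atTop (𝓝 xs) :=
        ((continuous_snd.comp continuous_snd).tendsto _).comp hlim
      have hxm : Tendsto (fun j => x (φ j - 1)) atTop (𝓝 xs) := by
        have h1 : Tendsto (fun j => x (φ j - 1 + 1) - x (φ j - 1)) atTop (𝓝 0) :=
          (tendsto_zero_iff_norm_tendsto_zero.mpr hxx).comp
            ((tendsto_sub_atTop_nat 1).comp hφ.tendsto_atTop)
        have h2 := hlx.sub h1
        rw [sub_zero] at h2
        refine h2.congr' ?_
        filter_upwards [hφ.tendsto_atTop.eventually_ge_atTop 1] with j hj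
        rw [Nat.sub_add_cancel hj]; abel
      rw [tendsto_order]
      constructor
      · intro a ha
        exact hlz.eventually (hg_lsc zs a ha)
      · intro b hb
        have hr : g zs = ((g zs).toReal : EReal) :=
          (EReal.coe_toReal hb.ne_top (hg_ne_bot _)).symm
        generalize (g zs).toReal = r at hr
        have hE : Tendsto (fun j => r + 1 / (2 * γ) * ‖(2 : ℝ) • y (φ j) - x (φ j - 1) - zs‖ ^ 2
            - 1 / (2 * γ) * ‖(2 : ℝ) • y (φ j) - x (φ j - 1) - z (φ j)‖ ^ 2) atTop (𝓝 r) := by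
          have hA := (((((hly.const_smul (2 : ℝ)).sub hxm).sub_const zs).norm.pow 2).const_mul
            (1 / (2 * γ))).const_add r
          have hB := ((((hly.const_smul (2 : ℝ)).sub hxm).sub hlz).norm.pow 2).const_mul
            (1 / (2 * γ))
          have := hA.sub hB
          rwa [add_sub_cancel_right] at this
        have hE' := (continuous_coe_real_ereal.tendsto r).comp hE
        rw [hr] at hb
        filter_upwards [hE'.eventually (gt_mem_nhds hb),
          hφ.tendsto_atTop.eventually_ge_atTop 1] with j h1 h2
        refine lt_of_le_of_lt ?_ h1
        have h3 := hz (φ j - 1) zs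
        have h4 := hG (φ j - 1)
        rw [Nat.sub_add_cancel h2] at h3 h4
        rw [hr, h4, ← EReal.coe_add, ← EReal.coe_add, EReal.coe_le_coe_iff] at h3
        rw [h4]
        simp only [Function.comp_apply]
        rw [EReal.coe_le_coe_iff]
        linarith
end

section
/- Let C ⊆ ℝⁿ be nonempty closed convex and D ⊆ ℝⁿ be nonempty closed, and suppose that either C or D is compact. Suppose 0 < γ < √(3/2) − 1 and let (yᵗ, zᵗ, xᵗ) be generated by the DR splitting method for the feasibility problem. Then the sequence (yᵗ, zᵗ, xᵗ) is bounded, ‖xᵗ⁺¹ − xᵗ‖ → 0 and ‖zᵗ⁺¹ − yᵗ⁺¹‖ → 0 as t → ∞, and every cluster point (y*, z*, x*) of the sequence satisfies y* = z* with z* ∈ D. -/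
open Filter Topology Bornology

theorem aux_vi {E : Type*} [NormedAddCommGroup E] [InnerProductSpace ℝ E] {C : Set E}
    (hC : Convex ℝ C) {w p : E} (hp : p ∈ C) (h : ∀ c ∈ C, dist w p ≤ dist w c) :
    ∀ c ∈ C, inner ℝ (w - p) (c - p) ≤ 0 := by
  rw [← norm_eq_iInf_iff_real_inner_le_zero hC hp]
  have : Nonempty C := ⟨⟨p, hp⟩⟩
  apply le_antisymm
  · apply le_ciInf
    intro c
    have := h c c.2
    rwa [dist_eq_norm, dist_eq_norm] at this
  · exact ciInf_le (f := fun c : C => ‖w - c‖)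
      ⟨0, by rintro _ ⟨c, rfl⟩; exact norm_nonneg _⟩ ⟨p, hp⟩

theorem aux_step_s3 {E : Type*} [NormedAddCommGroup E] [InnerProductSpace ℝ E]
    (γ : ℝ) (hγ : 0 < γ) (hγ2 : γ ≤ 1 / 2) (u v a b : E)
    (h1 : inner ℝ v (v - u) ≤ inner ℝ v a) (h2 : ‖b‖ ≤ γ * ‖u - (2 : ℝ) • v‖) :
    1 / (2 * γ) * ‖a‖ ^ 2 ≤
      ((1 - γ) / 2 * ‖u‖ ^ 2 + 1 / (2 * γ) * ‖a + γ • v‖ ^ 2) -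
      ((1 - γ) / 2 * ‖v‖ ^ 2 + 1 / (2 * γ) * ‖b‖ ^ 2) := by
  have h3 : ‖b‖ ^ 2 ≤ γ ^ 2 * ‖u - (2 : ℝ) • v‖ ^ 2 := by
    rw [← mul_pow]; exact pow_le_pow_left₀ (norm_nonneg _) h2 2
  have h4 : 1 / (2 * γ) * ‖b‖ ^ 2 ≤ γ / 2 * ‖u - (2 : ℝ) • v‖ ^ 2 := by
    calc _ ≤ 1 / (2 * γ) * (γ ^ 2 * ‖u - (2 : ℝ) • v‖ ^ 2) := by gcongr
      _ = _ := by field_simp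
  have h5 : ‖u - (2 : ℝ) • v‖ ^ 2 = ‖u‖ ^ 2 - 4 * inner ℝ u v + 4 * ‖v‖ ^ 2 := by
    rw [norm_sub_sq_real, inner_smul_right, norm_smul, mul_pow]; norm_num; ring
  have h6 : 1 / (2 * γ) * ‖a + γ • v‖ ^ 2 =
      1 / (2 * γ) * ‖a‖ ^ 2 + inner ℝ v a + γ / 2 * ‖v‖ ^ 2 := by
    rw [norm_add_sq_real, inner_smul_right, norm_smul, mul_pow, real_inner_comm v a,
      Real.norm_eq_abs, sq_abs]
    field_simp
  have h7 : ‖u - v‖ ^ 2 = ‖u‖ ^ 2 - 2 * inner ℝ u v + ‖v‖ ^ 2 := norm_sub_sq_real u v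
  rw [inner_sub_right, real_inner_self_eq_norm_sq, real_inner_comm] at h1
  rw [h5] at h4
  rw [h6]
  have h8 : 0 ≤ (1 / 2 - γ) * ‖u - v‖ ^ 2 := mul_nonneg (by linarith) (sq_nonneg _)
  rw [h7] at h8
  linarith

theorem aux_cl {E : Type*} [NormedAddCommGroup E] {D : Set E} (hDclosed : IsClosed D)
    (y z x : ℕ → E) (hdz0 : Tendsto (fun t => ‖z t - y t‖) atTop (𝓝 0))
    (hDev : ∀ᶠ t in atTop, z t ∈ D) {ys zs xs : E}
    (hcl : MapClusterPt (ys, zs, xs) atTop (fun t => (y t, z t, x t))) :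
    ys = zs ∧ zs ∈ D := by
  constructor
  · have hc2 : MapClusterPt ‖zs - ys‖ atTop (fun t => ‖z t - y t‖) :=
      hcl.continuousAt_comp (f := fun q : E ×
        E × E => ‖q.2.1 - q.1‖)
        (by fun_prop)
    have h0 : ‖zs - ys‖ = 0 := by
      by_contra hne
      have hd := disjoint_nhds_nhds.2 hne
      exact hc2.neBot.ne (disjoint_iff.1 (hd.mono_right hdz0))
    exact (sub_eq_zero.1 (norm_eq_zero.1 h0)).symm
  · have hc2 : MapClusterPt zs atTop z :=
      hcl.continuousAt_comp (f := fun q : E ×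
        E × E => q.2.1)
        (by fun_prop)
    rw [← hDclosed.closure_eq, mem_closure_iff_frequently]
    rw [mapClusterPt_iff_frequently] at hc2
    rw [frequently_nhds_iff]
    intro V hzV hV
    obtain ⟨t, ht1, ht2⟩ := ((hc2 V (hV.mem_nhds hzV)).and_eventually hDev).exists
    exact ⟨z t, ht1, ht2⟩

set_option maxHeartbeats 1000000 in
theorem stmt3 {n : ℕ}
    (C D : Set (EuclideanSpace ℝ (Fin n)))
    (hCne : C.Nonempty) (hCclosed : IsClosed C) (hCconv : Convex ℝ C)
    (hDne : D.Nonempty) (hDclosed : IsClosed D)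
    (hcompact : IsCompact C ∨ IsCompact D)
    (γ : ℝ) (hγ : 0 < γ) (hγ' : γ < Real.sqrt (3 / 2) - 1)
    (pC : EuclideanSpace ℝ (Fin n) → EuclideanSpace ℝ (Fin n))
    (hpC : ∀ w, pC w ∈ C ∧ ∀ c ∈ C, dist w (pC w) ≤ dist w c)
    (x y z : ℕ → EuclideanSpace ℝ (Fin n))
    (hy : ∀ t, y (t + 1) = (1 / (1 + γ)) • (x t + γ • pC (x t)))
    (hz : ∀ t, z (t + 1) ∈ D ∧
      ∀ w ∈ D, ‖(2 : ℝ) • y (t + 1) - x t - z (t + 1)‖ ≤ ‖(2 : ℝ) • y (t + 1) - x t - w‖)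
    (hx : ∀ t, x (t + 1) = x t + (z (t + 1) - y (t + 1))) :
    IsBounded (Set.range fun t => (y t, z t, x t)) ∧
    Tendsto (fun t => ‖x (t + 1) - x t‖) atTop (nhds 0) ∧
    Tendsto (fun t => ‖z (t + 1) - y (t + 1)‖) atTop (nhds 0) ∧
    ∀ ys zs xs, MapClusterPt (ys, zs, xs) atTop (fun t => (y t, z t, x t)) →
      ys = zs ∧ zs ∈ D := by
  have hγ1 : γ < 1 / 2 := by
    have : Real.sqrt (3 / 2) < 3 / 2 := by
      rw [Real.sqrt_lt' (by norm_num)]; norm_num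
    linarith
  have hg : (1 + γ) ≠ 0 := by positivity
  obtain ⟨U, hU⟩ : ∃ U : ℕ → EuclideanSpace ℝ (Fin n), ∀ t, U t = y (t + 1) - pC (x t) :=
    ⟨_, fun _ => rfl⟩
  have hyU : ∀ t, (1 + γ) • y (t + 1) = x t + γ • pC (x t) := by
    intro t; rw [hy, smul_smul, mul_one_div_cancel hg, one_smul]
  have hxU : ∀ t, x t = y (t + 1) + γ • U t := by
    intro t
    have e : x t = (1 + γ) • y (t + 1) - γ • pC (x t) := by rw [hyU]; abel
    rw [hU, smul_sub]
    nth_rewrite 1 [e]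
    module
  have hvi : ∀ t, ∀ c ∈ C, inner ℝ (U t) (c - pC (x t)) ≤ 0 := by
    intro t c hc
    have h := aux_vi hCconv (hpC (x t)).1 (hpC (x t)).2 c hc
    have e : x t - pC (x t) = (1 + γ) • U t := by
      have := hxU t
      have h2 := hU t
      have h3 : pC (x t) = y (t + 1) - U t := by rw [h2]; abel
      rw [h3]
      nth_rewrite 1 [this]
      module
    rw [e, real_inner_smul_left] at h
    by_contra hcon
    push Not at hcon
    have : 0 < (1 + γ) * inner ℝ (U t) (c - pC (x t)) := by positivity
    linarith
  have hzU : ∀ t, z (t + 1) = x (t + 1) - γ • U t := by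
    intro t
    have e1 := hx t
    have e2 := hxU t
    rw [e1]; nth_rewrite 1 [e2]; abel
  have hopt : ∀ t, ‖x (t + 2) - y (t + 2)‖ ≤ γ * ‖U t - (2 : ℝ) • U (t + 1)‖ := by
    intro t
    have h := (hz (t + 1)).2 (z (t + 1)) (hz t).1
    have e1 : (2 : ℝ) • y (t + 1 + 1) - x (t + 1) - z (t + 1 + 1) = y (t + 2) - x (t + 2) := by
      rw [hzU (t + 1), hxU (t + 1)]; module
    have e2 : (2 : ℝ) • y (t + 1 + 1) - x (t + 1) - z (t + 1)
        = γ • (U t - (2 : ℝ) • U (t + 1)) := by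
      rw [hzU t, hxU (t + 1)]; module
    rw [e1, e2, norm_smul, Real.norm_of_nonneg hγ.le, norm_sub_rev] at h
    exact h
  obtain ⟨a, ha⟩ : ∃ a : ℕ → EuclideanSpace ℝ (Fin n), ∀ t, a t = y (t + 2) - y (t + 1) :=
    ⟨_, fun _ => rfl⟩
  have hap : ∀ t, a t = (U (t + 1) - U t) + (pC (x (t + 1)) - pC (x t)) := by
    intro t; rw [ha, hU, hU]; abel
  have hv1 : ∀ t, 0 ≤ inner ℝ (U (t + 1)) (pC (x (t + 1)) - pC (x t)) := by
    intro t
    have h := hvi (t + 1) _ (hpC (x t)).1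
    rw [← neg_sub, inner_neg_right] at h
    linarith
  have hv2 : ∀ t, inner ℝ (U t) (pC (x (t + 1)) - pC (x t)) ≤ 0 := fun t =>
    hvi t _ (hpC (x (t + 1))).1
  have hUa : ∀ t, ‖U (t + 1) - U t‖ ≤ ‖a t‖ := by
    intro t
    apply le_of_sq_le_sq _ (norm_nonneg _)
    rw [hap, norm_add_sq_real, inner_sub_left]
    nlinarith [hv1 t, hv2 t, sq_nonneg ‖pC (x (t + 1)) - pC (x t)‖]
  obtain ⟨e, he⟩ : ∃ e : ℕ → ℝ, ∀ t, e t = (1 - γ) / 2 * ‖U t‖ ^ 2 +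
      1 / (2 * γ) * ‖x (t + 1) - y (t + 1)‖ ^ 2 := ⟨_, fun _ => rfl⟩
  have hstep : ∀ t, 1 / (2 * γ) * ‖a t‖ ^ 2 ≤ e t - e (t + 1) := by
    intro t
    have e1 : x (t + 1) - y (t + 1) = a t + γ • U (t + 1) := by
      rw [ha, hxU (t + 1)]; abel
    rw [he, he, e1]
    refine aux_step_s3 γ hγ hγ1.le _ _ _ _ ?_ (hopt t)
    rw [hap, inner_add_right]
    linarith [hv1 t]
  have hpos : 0 < 1 / (2 * γ) := by positivity
  have he0 : ∀ t, 0 ≤ e t := by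
    intro t; rw [he]
    have : 0 ≤ (1 - γ) / 2 := by linarith
    positivity
  have hanti : Antitone e := antitone_nat_of_succ_le (fun t => by
    have h1 := hstep t
    have : 0 ≤ 1 / (2 * γ) * ‖a t‖ ^ 2 := by positivity
    linarith)
  have hlim : Tendsto e atTop (𝓝 (⨅ t, e t)) :=
    tendsto_atTop_ciInf hanti ⟨0, by rintro _ ⟨t, rfl⟩; exact he0 t⟩
  have hdiff : Tendsto (fun t => e t - e (t + 1)) atTop (𝓝 0) := by
    simpa using hlim.sub (hlim.comp (tendsto_add_atTop_nat 1))
  have hasq : Tendsto (fun t => ‖a t‖ ^ 2) atTop (𝓝 0) := by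
    have h : Tendsto (fun t => (2 * γ) * (e t - e (t + 1))) atTop (𝓝 0) := by
      simpa using hdiff.const_mul (2 * γ)
    refine squeeze_zero (fun t => by positivity) (fun t => ?_) h
    have h1 := mul_le_mul_of_nonneg_left (hstep t) (show 0 ≤ 2 * γ by positivity)
    rwa [← mul_assoc, mul_one_div_cancel (by positivity), one_mul] at h1
  have hat : Tendsto (fun t => ‖a t‖) atTop (𝓝 0) := by
    have h := (Real.continuous_sqrt.tendsto 0).comp hasq
    simpa [Function.comp_def, Real.sqrt_sq (norm_nonneg _)] using h
  have hdx : Tendsto (fun t => ‖x (t + 1) - x t‖) atTop (𝓝 0) := by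
    have h : Tendsto (fun t => (1 + γ) * ‖a t‖) atTop (𝓝 0) := by
      simpa using hat.const_mul (1 + γ)
    refine squeeze_zero (fun t => norm_nonneg _) (fun t => ?_) h
    have e1 : x (t + 1) - x t = a t + γ • (U (t + 1) - U t) := by
      rw [ha, hxU (t + 1), hxU t]; module
    rw [e1]
    calc _ ≤ ‖a t‖ + ‖γ • (U (t + 1) - U t)‖ := norm_add_le _ _
      _ = ‖a t‖ + γ * ‖U (t + 1) - U t‖ := by rw [norm_smul, Real.norm_of_nonneg hγ.le]
      _ ≤ ‖a t‖ + γ * ‖a t‖ := by gcongr; exact hUa t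
      _ = _ := by ring
  have hzy : ∀ t, z (t + 1) - y (t + 1) = x (t + 1) - x t := by
    intro t; rw [hx t]; abel
  have hdz : Tendsto (fun t => ‖z (t + 1) - y (t + 1)‖) atTop (𝓝 0) := by
    simpa only [hzy] using hdx
  refine ⟨?_, hdx, hdz, ?_⟩
  · have hele : ∀ t, e t ≤ e 0 := fun t => hanti (Nat.zero_le t)
    obtain ⟨K, hK0, hKU, hKx⟩ : ∃ K : ℝ, 0 ≤ K ∧ (∀ t, ‖U t‖ ≤ K) ∧
        ∀ t, ‖x (t + 1) - y (t + 1)‖ ≤ K := by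
      have hc : 0 < (1 - γ) / 2 := by linarith
      refine ⟨Real.sqrt (e 0 / ((1 - γ) / 2)) + Real.sqrt (e 0 / (1 / (2 * γ))),
        by positivity, fun t => ?_, fun t => ?_⟩
      · have h1 := hele t
        rw [he t] at h1
        have h2 : 0 ≤ 1 / (2 * γ) * ‖x (t + 1) - y (t + 1)‖ ^ 2 := by positivity
        have h3 : ‖U t‖ ≤ Real.sqrt (e 0 / ((1 - γ) / 2)) := by
          apply Real.le_sqrt_of_sq_le
          rw [le_div_iff₀ hc]; linarith
        linarith [Real.sqrt_nonneg (e 0 / (1 / (2 * γ)))]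
      · have h1 := hele t
        rw [he t] at h1
        have h2 : 0 ≤ (1 - γ) / 2 * ‖U t‖ ^ 2 := by positivity
        have h3 : ‖x (t + 1) - y (t + 1)‖ ≤ Real.sqrt (e 0 / (1 / (2 * γ))) := by
          apply Real.le_sqrt_of_sq_le
          rw [le_div_iff₀ hpos]; linarith
        linarith [Real.sqrt_nonneg (e 0 / ((1 - γ) / 2))]
    have hgU : ∀ t, ‖γ • U t‖ ≤ K := by
      intro t
      rw [norm_smul, Real.norm_of_nonneg hγ.le]
      nlinarith [hKU t, norm_nonneg (U t)]
    obtain ⟨R, hR⟩ : ∃ R : ℝ, ∀ t, ‖x (t + 1)‖ ≤ R := by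
      rcases hcompact with h | h
      · obtain ⟨B, hB⟩ := h.isBounded.exists_norm_le
        refine ⟨K + K + B, fun t => ?_⟩
        have e1 : x (t + 1) = (x (t + 1) - y (t + 1)) + U t + pC (x t) := by
          rw [hU]; abel
        rw [e1]
        exact (norm_add₃_le).trans (add_le_add (add_le_add (hKx t) (hKU t)) (hB _ (hpC _).1))
      · obtain ⟨B, hB⟩ := h.isBounded.exists_norm_le
        refine ⟨B + K, fun t => ?_⟩
        have e1 : x (t + 1) = z (t + 1) + γ • U t := by rw [hzU]; abel
        rw [e1]
        exact (norm_add_le _ _).trans (add_le_add (hB _ (hz t).1) (hgU t))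
    have hsub : (Set.range fun t => (y t, z t, x t)) ⊆
        {(y 0, z 0, x 0)} ∪ Metric.closedBall 0 (R + K) := by
      rintro _ ⟨t, rfl⟩
      cases t with
      | zero => left; rfl
      | succ t =>
        right
        rw [mem_closedBall_zero_iff]
        have hy' : ‖y (t + 1)‖ ≤ R + K := by
          have e1 : y (t + 1) = x (t + 1) - (x (t + 1) - y (t + 1)) := by abel
          rw [e1]
          exact (norm_sub_le _ _).trans (add_le_add (hR t) (hKx t))
        have hz' : ‖z (t + 1)‖ ≤ R + K := by
          rw [hzU]
          exact (norm_sub_le _ _).trans (add_le_add (hR t) (hgU t))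
        have hx' : ‖x (t + 1)‖ ≤ R + K := by linarith [hR t]
        simp only [Prod.norm_def]
        exact max_le hy' (max_le hz' hx')
    exact (Bornology.isBounded_singleton.union Metric.isBounded_closedBall).subset hsub
  · intro ys zs xs hcl
    have hdz0 : Tendsto (fun t => ‖z t - y t‖) atTop (𝓝 0) :=
      (tendsto_add_atTop_iff_nat 1).1 hdz
    have hDev : ∀ᶠ t in atTop, z t ∈ D := by
      filter_upwards [eventually_ge_atTop 1] with t ht
      obtain ⟨s, rfl⟩ := Nat.exists_eq_add_of_le' ht
      exact (hz s).1
    exact aux_cl hDclosed y z x hdz0 hDev hcl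
end

section
/- Suppose 0 < γ < √(3/2) − 1 and let (yᵗ, zᵗ, xᵗ) be generated by the DR splitting method for the feasibility problem. Define E_γ(y, z, x) := (1/2)·d_C(y)² − (1/(2γ))‖y − z‖² + (1/γ)⟨x − y, z − y⟩. Then for every t ≥ 1, E_γ(yᵗ⁺¹, zᵗ⁺¹, xᵗ⁺¹) − E_γ(yᵗ, zᵗ, xᵗ) ≤ (1/γ)·((1 + γ)² − 3/2)·‖yᵗ⁺¹ − yᵗ‖² ≤ 0; in particular t ↦ E_γ(yᵗ, zᵗ, xᵗ) is nonincreasing for t ≥ 1. -/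
open Filter Topology

lemma aux_alg {V : Type*} [NormedAddCommGroup V] [InnerProductSpace ℝ V] (γ : ℝ) (hγ : 0 < γ)
    (u v q w : V) (h1 : 0 ≤ inner ℝ v q) (h2 : inner ℝ u q ≤ 0)
    (h3 : ‖γ • v + w‖ ≤ ‖γ • v + γ • (v - u)‖) :
    (1 / 2 * ‖v‖ ^ 2 - 1 / (2 * γ) * ‖w‖ ^ 2 + 1 / γ * (inner ℝ (w + γ • v) w : ℝ))
    - (1 / 2 * ‖u‖ ^ 2 - 1 / (2 * γ) * ‖q + (v - u) + γ • (v - u)‖ ^ 2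
      + 1 / γ * (inner ℝ (q + (v - u) + γ • v) (q + (v - u) + γ • (v - u)) : ℝ))
    ≤ 1 / γ * ((1 + γ) ^ 2 - 3 / 2) * ‖q + (v - u)‖ ^ 2 := by
  have h3' : ‖γ • v + w‖ ^ 2 ≤ ‖γ • v + γ • (v - u)‖ ^ 2 := by gcongr
  have hq : 0 ≤ inner ℝ q q := real_inner_self_nonneg
  have hs : 0 ≤ inner ℝ (v - u) (v - u) := real_inner_self_nonneg
  simp only [← real_inner_self_eq_norm_sq, inner_add_left, inner_add_right, inner_sub_left,
    inner_sub_right, real_inner_smul_left, real_inner_smul_right] at *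
  rw [real_inner_comm v w, real_inner_comm u v, real_inner_comm v q, real_inner_comm u q] at *
  generalize inner ℝ u u = uu at *
  generalize inner ℝ v v = vv at *
  generalize inner ℝ q q = qq at *
  generalize inner ℝ w w = ww at *
  generalize inner ℝ v w = vw at *
  generalize inner ℝ u v = uv at *
  generalize inner ℝ v q = vq at *
  generalize inner ℝ u q = uq at *
  rw [← sub_nonneg]
  have key : ∀ A : ℝ, 0 ≤ γ * A → 0 ≤ A := fun A h => nonneg_of_mul_nonneg_right h hγ
  apply key
  have g1 := mul_nonneg hγ.le h1
  have g2 := mul_nonneg hγ.le (neg_nonneg.2 h2)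
  have g3 := mul_nonneg hγ.le hq
  have g4 := mul_nonneg hγ.le hs
  have g5 := mul_nonneg hγ.le g1
  have g6 := mul_nonneg hγ.le g2
  have g7 := mul_nonneg hγ.le g3
  field_simp
  ring_nf at *
  linarith

lemma aux_var {V : Type*} [NormedAddCommGroup V] [InnerProductSpace ℝ V] (C : Set V)
    (hC : Convex ℝ C) (a p : V) (hp : p ∈ C) (h : ∀ c ∈ C, dist a p ≤ dist a c) :
    ∀ c ∈ C, inner ℝ (a - p) (c - p) ≤ 0 := by
  refine (norm_eq_iInf_iff_real_inner_le_zero hC hp).1 ?_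
  have : Nonempty C := ⟨⟨p, hp⟩⟩
  apply le_antisymm
  · exact le_ciInf fun c => by simpa [dist_eq_norm] using h c c.2
  · exact ciInf_le (f := fun c : C => ‖a - c‖) ⟨0, by rintro _ ⟨c, rfl⟩; positivity⟩ ⟨p, hp⟩

lemma aux_dist {V : Type*} [NormedAddCommGroup V] [InnerProductSpace ℝ V] (C : Set V)
    (a p : V) (hp : p ∈ C) (h : ∀ c ∈ C, inner ℝ (a - p) (c - p) ≤ 0) :
    Metric.infDist a C = ‖a - p‖ := by
  apply le_antisymm
  · rw [← dist_eq_norm]; exact Metric.infDist_le_dist_of_mem hp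
  · rw [Metric.le_infDist ⟨p, hp⟩]
    intro c hc
    rw [dist_eq_norm]
    have h1 := h c hc
    have h2 := norm_sub_sq_real (a - p) (c - p)
    rw [sub_sub_sub_cancel_right] at h2
    apply le_of_sq_le_sq _ (norm_nonneg _)
    nlinarith [sq_nonneg ‖c - p‖]

theorem stmt4 {n : ℕ}
    (C D : Set (EuclideanSpace ℝ (Fin n)))
    (hCne : C.Nonempty) (hCclosed : IsClosed C) (hCconv : Convex ℝ C)
    (hDne : D.Nonempty) (hDclosed : IsClosed D)
    (γ : ℝ) (hγ : 0 < γ) (hγ' : γ < Real.sqrt (3 / 2) - 1)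
    (pC : EuclideanSpace ℝ (Fin n) → EuclideanSpace ℝ (Fin n))
    (hpC : ∀ w, pC w ∈ C ∧ ∀ c ∈ C, dist w (pC w) ≤ dist w c)
    (x y z : ℕ → EuclideanSpace ℝ (Fin n))
    (hy : ∀ t, y (t + 1) = (1 / (1 + γ)) • (x t + γ • pC (x t)))
    (hz : ∀ t, z (t + 1) ∈ D ∧
      ∀ w ∈ D, ‖(2 : ℝ) • y (t + 1) - x t - z (t + 1)‖ ≤ ‖(2 : ℝ) • y (t + 1) - x t - w‖)
    (hx : ∀ t, x (t + 1) = x t + (z (t + 1) - y (t + 1)))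
    (E : EuclideanSpace ℝ (Fin n) → EuclideanSpace ℝ (Fin n) → EuclideanSpace ℝ (Fin n) → ℝ)
    (hE : ∀ a b c, E a b c
        = 1 / 2 * Metric.infDist a C ^ 2 - 1 / (2 * γ) * ‖a - b‖ ^ 2
          + 1 / γ * (inner ℝ (c - a) (b - a) : ℝ)) :
    ∀ t, 1 ≤ t →
      (E (y (t + 1)) (z (t + 1)) (x (t + 1)) - E (y t) (z t) (x t)
          ≤ 1 / γ * ((1 + γ) ^ 2 - 3 / 2) * ‖y (t + 1) - y t‖ ^ 2) ∧
      (1 / γ * ((1 + γ) ^ 2 - 3 / 2) * ‖y (t + 1) - y t‖ ^ 2 ≤ 0) ∧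
      E (y (t + 1)) (z (t + 1)) (x (t + 1)) ≤ E (y t) (z t) (x t) := by
  have hg1 : (1 + γ) ≠ 0 := by positivity
  -- step facts
  have hxy : ∀ t, x t - y (t + 1) = γ • (y (t + 1) - pC (x t)) := by
    intro t
    have : (1 + γ) • y (t + 1) = x t + γ • pC (x t) := by
      rw [hy, smul_smul, mul_one_div_cancel hg1, one_smul]
    rw [add_smul, one_smul] at this
    rw [smul_sub, sub_eq_sub_iff_add_eq_add, add_comm _ (y (t + 1)), this]
  have hvar : ∀ t, ∀ c ∈ C, inner ℝ (y (t + 1) - pC (x t)) (c - pC (x t)) ≤ 0 := by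
    intro t c hc
    have h := aux_var C hCconv (x t) (pC (x t)) (hpC _).1 (hpC _).2 c hc
    have e : x t - pC (x t) = (1 + γ) • (y (t + 1) - pC (x t)) := by
      rw [add_smul, one_smul, ← hxy]; abel
    rw [e, real_inner_smul_left] at h
    exact nonpos_of_mul_nonpos_right h (by positivity)
  have hdist : ∀ t, Metric.infDist (y (t + 1)) C = ‖y (t + 1) - pC (x t)‖ := fun t =>
    aux_dist C _ _ (hpC _).1 (hvar t)
  intro t ht
  obtain ⟨t, rfl⟩ : ∃ s, t = s + 1 := ⟨t - 1, by omega⟩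
  have hneg : 1 / γ * ((1 + γ) ^ 2 - 3 / 2) * ‖y (t + 1 + 1) - y (t + 1)‖ ^ 2 ≤ 0 := by
    have hs : (1 + γ) ^ 2 ≤ 3 / 2 := by
      rw [← Real.sq_sqrt (show (0 : ℝ) ≤ 3 / 2 by norm_num)]
      have : 1 + γ ≤ Real.sqrt (3 / 2) := by linarith
      gcongr
    apply mul_nonpos_of_nonpos_of_nonneg _ (sq_nonneg _)
    apply mul_nonpos_of_nonneg_of_nonpos (by positivity) (by linarith)
  have main : E (y (t + 1 + 1)) (z (t + 1 + 1)) (x (t + 1 + 1)) - E (y (t + 1)) (z (t + 1)) (x (t + 1))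
      ≤ 1 / γ * ((1 + γ) ^ 2 - 3 / 2) * ‖y (t + 1 + 1) - y (t + 1)‖ ^ 2 := by
    have a0 := hxy t
    have a1 := hxy (t + 1)
    have b0 := hx t
    have b1 := hx (t + 1)
    have v0 := hvar t (pC (x (t + 1))) (hpC _).1
    have v1 := hvar (t + 1) (pC (x t)) (hpC _).1
    have hm := (hz (t + 1)).2 (z (t + 1)) (hz t).1
    rw [hE, hE, hdist, hdist]
    generalize hu : y (t + 1) - pC (x t) = u at *
    generalize hv : y (t + 1 + 1) - pC (x (t + 1)) = v at *
    generalize hq : pC (x (t + 1)) - pC (x t) = q at *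
    generalize hw : z (t + 1 + 1) - y (t + 1 + 1) = w at *
    have e1 : y (t + 1 + 1) - y (t + 1) = q + (v - u) := by
      rw [← hu, ← hv, ← hq]; abel
    have e2 : x (t + 1) - y (t + 1) = q + (v - u) + γ • v := by
      rw [← e1, ← a1]; abel
    have e3 : z (t + 1) - y (t + 1) = q + (v - u) + γ • (v - u) := by
      rw [smul_sub, ← a0, ← a1, ← e1, b0]; abel
    have e4 : x (t + 1 + 1) - y (t + 1 + 1) = w + γ • v := by
      rw [b1, ← a1]; abel
    have e5 : (2 : ℝ) • y (t + 1 + 1) - x (t + 1) - z (t + 1 + 1) = -(γ • v + w) := by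
      rw [← a1, ← hw, two_smul]; abel
    have e6 : (2 : ℝ) • y (t + 1 + 1) - x (t + 1) - z (t + 1) = -(γ • v + γ • (v - u)) := by
      rw [smul_sub, ← a0, ← a1, b0, two_smul]; abel
    rw [e5, e6, norm_neg, norm_neg] at hm
    rw [norm_sub_rev (y (t + 1 + 1)), norm_sub_rev (y (t + 1)) (z (t + 1)), hw, e1, e2, e3, e4]
    refine aux_alg γ hγ u v q w ?_ v0 hm
    have : pC (x t) - pC (x (t + 1)) = -q := by rw [← hq]; abel
    rw [this, inner_neg_right] at v1
    linarith
  exact ⟨main, hneg, by linarith⟩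
end

section
/- Let H be a real Hilbert space, C ⊆ H a nonempty closed convex set, γ > 0 and x ∈ H. Then the point y* := (1/(1+γ))·(x + γ P_C(x)) is the unique minimizer over H of the function φ(y) := (1/2)·d_C(y)² + (1/(2γ))‖y − x‖². -/
theorem stmt6 {H : Type*} [NormedAddCommGroup H] [InnerProductSpace ℝ H] [CompleteSpace H]
    (C : Set H) (hCne : C.Nonempty) (hCclosed : IsClosed C) (hCconv : Convex ℝ C)
    (pC : H → H) (hpC : ∀ w, pC w ∈ C ∧ ∀ c ∈ C, dist w (pC w) ≤ dist w c)
    (γ : ℝ) (hγ : 0 < γ) (x : H) :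
    (∀ w, 1 / 2 * Metric.infDist ((1 / (1 + γ)) • (x + γ • pC x)) C ^ 2
        + 1 / (2 * γ) * ‖(1 / (1 + γ)) • (x + γ • pC x) - x‖ ^ 2
        ≤ 1 / 2 * Metric.infDist w C ^ 2 + 1 / (2 * γ) * ‖w - x‖ ^ 2) ∧
    ∀ w, (∀ u, 1 / 2 * Metric.infDist w C ^ 2 + 1 / (2 * γ) * ‖w - x‖ ^ 2
        ≤ 1 / 2 * Metric.infDist u C ^ 2 + 1 / (2 * γ) * ‖u - x‖ ^ 2) →
      w = (1 / (1 + γ)) • (x + γ • pC x) := by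
  have hinf : ∀ w, Metric.infDist w C = ‖w - pC w‖ := by
    intro w
    rw [← dist_eq_norm]
    exact le_antisymm (Metric.infDist_le_dist_of_mem (hpC w).1)
      ((Metric.le_infDist hCne).2 fun c hc => (hpC w).2 c hc)
  have hvar : ∀ q ∈ C, inner ℝ (x - pC x) (q - pC x) ≤ 0 := by
    refine (norm_eq_iInf_iff_real_inner_le_zero hCconv (hpC x).1).1 ?_
    have : Nonempty C := hCne.to_subtype
    apply le_antisymm
    · refine le_ciInf fun c => ?_
      have := (hpC x).2 c c.2
      rwa [dist_eq_norm, dist_eq_norm] at this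
    · exact ciInf_le (f := fun c : C => ‖x - c‖)
        ⟨0, by rintro _ ⟨c, rfl⟩; exact norm_nonneg _⟩ ⟨pC x, (hpC x).1⟩
  have hg1 : (0 : ℝ) < 1 + γ := by linarith
  have hpyth : ∀ q ∈ C, ‖x - pC x‖ ^ 2 + ‖q - pC x‖ ^ 2 ≤ ‖x - q‖ ^ 2 := by
    intro q hq
    have h1 : x - q = (x - pC x) - (q - pC x) := by abel
    rw [h1, norm_sub_sq_real (x - pC x) (q - pC x)]
    have := hvar q hq
    linarith
  have hid : ∀ w q : H, 1 / 2 * ‖w - q‖ ^ 2 + 1 / (2 * γ) * ‖w - x‖ ^ 2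
      = 1 / (2 * (1 + γ)) * ‖x - q‖ ^ 2
        + 1 / (2 * γ * (1 + γ)) * ‖γ • (w - q) + (w - x)‖ ^ 2 := by
    intro w q
    have h1 : x - q = (w - q) - (w - x) := by abel
    rw [h1, norm_sub_sq_real (w - q) (w - x), norm_add_sq_real, norm_smul, inner_smul_left, mul_pow]
    simp only [Real.norm_eq_abs, sq_abs, conj_trivial]
    field_simp
    ring
  set y := (1 / (1 + γ)) • (x + γ • pC x) with hy
  have hyz : γ • (y - pC x) + (y - x) = 0 := by
    rw [hy]
    match_scalars <;> field_simp <;> ring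
  have hyup : 1 / 2 * Metric.infDist y C ^ 2 + 1 / (2 * γ) * ‖y - x‖ ^ 2
      ≤ 1 / (2 * (1 + γ)) * ‖x - pC x‖ ^ 2 := by
    have h1 := hid y (pC x)
    rw [hyz] at h1
    have h2 : Metric.infDist y C ≤ ‖y - pC x‖ := by
      rw [← dist_eq_norm]
      exact Metric.infDist_le_dist_of_mem (hpC x).1
    have h3 : Metric.infDist y C ^ 2 ≤ ‖y - pC x‖ ^ 2 :=
      pow_le_pow_left₀ Metric.infDist_nonneg h2 2
    simp only [norm_zero] at h1
    linarith
  have hlow : ∀ w, 1 / (2 * (1 + γ)) * ‖x - pC x‖ ^ 2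
      + 1 / (2 * (1 + γ)) * ‖pC w - pC x‖ ^ 2
      + 1 / (2 * γ * (1 + γ)) * ‖γ • (w - pC w) + (w - x)‖ ^ 2
      ≤ 1 / 2 * Metric.infDist w C ^ 2 + 1 / (2 * γ) * ‖w - x‖ ^ 2 := by
    intro w
    rw [hinf w, hid w (pC w), ← mul_add]
    have := hpyth (pC w) (hpC w).1
    gcongr
  have hk1 : 0 < 1 / (2 * (1 + γ)) := by positivity
  have hk2 : 0 < 1 / (2 * γ * (1 + γ)) := by positivity
  constructor
  · intro w
    have h1 := hlow w
    have h2 := mul_nonneg hk1.le (sq_nonneg ‖pC w - pC x‖)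
    have h3 := mul_nonneg hk2.le (sq_nonneg ‖γ • (w - pC w) + (w - x)‖)
    linarith
  · intro w hw
    have h1 := hlow w
    have h2 := mul_nonneg hk1.le (sq_nonneg ‖pC w - pC x‖)
    have h3 := mul_nonneg hk2.le (sq_nonneg ‖γ • (w - pC w) + (w - x)‖)
    have h4 := hw y
    have h5 : 1 / (2 * (1 + γ)) * ‖pC w - pC x‖ ^ 2 = 0 := by linarith
    have h6 : 1 / (2 * γ * (1 + γ)) * ‖γ • (w - pC w) + (w - x)‖ ^ 2 = 0 := by linarith
    have h7 : pC w - pC x = 0 :=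
      norm_eq_zero.1 (pow_eq_zero_iff two_ne_zero |>.1 ((mul_eq_zero.1 h5).resolve_left hk1.ne'))
    have h8 : γ • (w - pC w) + (w - x) = 0 :=
      norm_eq_zero.1 (pow_eq_zero_iff two_ne_zero |>.1 ((mul_eq_zero.1 h6).resolve_left hk2.ne'))
    rw [sub_eq_zero.1 h7] at h8
    have h9 : (1 + γ) • (w - y) = 0 := by
      have : (1 + γ) • (w - y)
          = (γ • (w - pC x) + (w - x)) - (γ • (y - pC x) + (y - x)) := by module
      rw [this, h8, hyz, sub_zero]
    exact sub_eq_zero.1 ((smul_eq_zero.1 h9).resolve_left hg1.ne')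
end

section
/- Let θ ∈ (0, 1/2] and M > 0, and let (l_t) be a nonincreasing sequence of positive real numbers with l_t → 0 such that l_t − l_{t+1} ≥ M·l_t^{2θ} for all sufficiently large t. Then M < 1 and there exist μ > 0 and η ∈ (0,1) such that l_t ≤ μ·ηᵗ for all sufficiently large t. -/
open Filter Topology

theorem stmt15 (θ M : ℝ) (hθ : θ ∈ Set.Ioc (0 : ℝ) (1 / 2)) (hM : 0 < M)
    (l : ℕ → ℝ) (hpos : ∀ t, 0 < l t) (hmono : Antitone l)
    (hlim : Tendsto l atTop (nhds 0))
    (h : ∀ᶠ t in atTop, M * l t ^ (2 * θ) ≤ l t - l (t + 1)) :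
    M < 1 ∧ ∃ μ > (0 : ℝ), ∃ η ∈ Set.Ioo (0 : ℝ) 1, ∀ᶠ t in atTop, l t ≤ μ * η ^ t := by
  have h1 : ∀ᶠ t in atTop, l t < 1 := hlim.eventually_lt_const one_pos
  obtain ⟨N, hN⟩ := eventually_atTop.1 (h.and h1)
  have key : ∀ t ≥ N, M * l t ≤ l t - l (t + 1) := by
    intro t ht
    obtain ⟨ha, hb⟩ := hN t ht
    have h2 : l t ^ (1 : ℝ) ≤ l t ^ (2 * θ) :=
      Real.rpow_le_rpow_of_exponent_ge (hpos t) hb.le (by linarith [hθ.2])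
    rw [Real.rpow_one] at h2
    exact (mul_le_mul_of_nonneg_left h2 hM.le).trans ha
  have hM1 : M < 1 := by
    have := key N le_rfl
    by_contra! hc
    nlinarith [hpos N, hpos (N + 1)]
  have hη : 0 < 1 - M := by linarith
  refine ⟨hM1, l N / (1 - M) ^ N, div_pos (hpos N) (pow_pos hη N), 1 - M,
    ⟨hη, by linarith⟩, eventually_atTop.2 ⟨N, fun t ht => ?_⟩⟩
  induction t, ht using Nat.le_induction with
  | base => exact (div_mul_cancel₀ _ (pow_pos hη N).ne').ge
  | succ t ht ih =>
    have h3 := key t ht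
    have h4 := mul_le_mul_of_nonneg_right ih hη.le
    rw [pow_succ, ← mul_assoc]
    linarith
end

section
/- Let θ ∈ (1/2, 1) and M > 0, and let (l_t) be a nonincreasing sequence of positive real numbers such that l_t − l_{t+1} ≥ M·l_t^{2θ} for all sufficiently large t. Then there exists κ > 0 such that l_t ≤ κ·t^{−1/(2θ−1)} for all sufficiently large t. -/
open Filter Topology

theorem stmt16_step (p M a b : ℝ) (hp : 0 < p) (ha : 0 < a) (hb : 0 < b)
    (h : M * a ^ (p + 1) ≤ a - b) : a ^ (-p) + p * M ≤ b ^ (-p) := by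
  have h1 : b ^ (-p) = a ^ (-p) * (b / a) ^ (-p) := by
    rw [← Real.mul_rpow ha.le (by positivity)]
    congr 1
    field_simp
  have h2 : 1 + Real.log (b / a) * (-p) ≤ (b / a) ^ (-p) := by
    rw [Real.rpow_def_of_pos (by positivity)]
    linarith [Real.add_one_le_exp (Real.log (b / a) * (-p))]
  have h3 := Real.log_le_sub_one_of_pos (div_pos hb ha)
  have h4 : b / a - 1 ≤ - (M * a ^ p) := by
    rw [Real.rpow_add ha, Real.rpow_one] at h
    rw [sub_le_iff_le_add, div_le_iff₀ ha]
    linarith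
  have h5 : 1 + p * (M * a ^ p) ≤ (b / a) ^ (-p) := by nlinarith
  have h6 : a ^ (-p) * a ^ p = 1 := by
    rw [← Real.rpow_add ha]; simp
  have h7 : 0 < a ^ (-p) := Real.rpow_pos_of_pos ha _
  rw [h1]
  calc a ^ (-p) + p * M = a ^ (-p) * (1 + p * (M * a ^ p)) := by
        linear_combination (-p * M) * h6
    _ ≤ _ := mul_le_mul_of_nonneg_left h5 h7.le

theorem stmt16 (θ M : ℝ) (hθ : θ ∈ Set.Ioo (1 / 2 : ℝ) 1) (hM : 0 < M)
    (l : ℕ → ℝ) (hpos : ∀ t, 0 < l t) (hmono : Antitone l)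
    (h : ∀ᶠ t in atTop, M * l t ^ (2 * θ) ≤ l t - l (t + 1)) :
    ∃ κ > (0 : ℝ), ∀ᶠ t in atTop, l t ≤ κ * (t : ℝ) ^ (-(1 / (2 * θ - 1))) := by
  obtain ⟨N, hN⟩ := eventually_atTop.1 h
  obtain ⟨p, hpdef⟩ : ∃ p, p = 2 * θ - 1 := ⟨_, rfl⟩
  have hp : 0 < p := by linarith [hθ.1]
  have hθp : 2 * θ = p + 1 := by linarith
  rw [← hpdef]
  have key : ∀ n : ℕ, p * M * n ≤ l (N + n) ^ (-p) := by
    intro n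
    induction n with
    | zero => simpa using (Real.rpow_pos_of_pos (hpos N) (-p)).le
    | succ n ih =>
      have h1 := hN (N + n) (by omega)
      rw [hθp] at h1
      have h2 := stmt16_step p M _ _ hp (hpos _) (hpos _) h1
      rw [← add_assoc]
      push_cast
      linarith
  have hc : 0 < p * M / 2 := by positivity
  refine ⟨(p * M / 2) ^ (-(1 / p)), Real.rpow_pos_of_pos hc _, ?_⟩
  filter_upwards [eventually_ge_atTop (2 * N + 1)] with t ht
  obtain ⟨n, rfl⟩ : ∃ n, t = N + n := ⟨t - N, by omega⟩
  have ht0 : (0 : ℝ) < ((N + n : ℕ) : ℝ) := by exact_mod_cast (by omega : 0 < N + n)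
  have hn : ((N + n : ℕ) : ℝ) ≤ 2 * n := by exact_mod_cast (by omega : N + n ≤ 2 * n)
  have h1 : p * M / 2 * ((N + n : ℕ) : ℝ) ≤ l (N + n) ^ (-p) := by
    have := mul_le_mul_of_nonneg_left hn hc.le
    linarith [key n]
  rw [← Real.mul_rpow hc.le ht0.le]
  have h2 := Real.rpow_le_rpow_of_nonpos (mul_pos hc ht0) h1
    (by simp only [Left.neg_nonpos_iff]; positivity : -(1 / p) ≤ 0)
  rw [← Real.rpow_mul (hpos _).le] at h2
  have h3 : -p * -(1 / p) = 1 := by field_simp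
  rwa [h3, Real.rpow_one] at h2
end

section
/- In ℝ², let C = {(x₁, x₂) : x₂ = 0} and D = {(0,0), (7+η, η), (7, −η)} with η ∈ (0,1], let 0 < γ < √(3/2) − 1, and let (yᵗ, zᵗ, xᵗ) be generated by the DR splitting method for the feasibility problem with initial point x⁰ = (7, η). Define a_1 = 2 − 1/(1+γ) and a_{t+1} = (γ/(1+γ))·a_t + 1. Then the iterates are uniquely determined and satisfy for all t ≥ 1: yᵗ⁺¹ = (7+η, (a_t/(1+γ))·η), zᵗ⁺¹ = (7+η, η) and xᵗ⁺¹ = (7+η, a_{t+1}·η); consequently yᵗ → (7+η, η), zᵗ → (7+η, η) and xᵗ → (7+η, (1+γ)·η) as t → ∞. -/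
open Filter Topology

abbrev E2 := EuclideanSpace ℝ (Fin 2)

theorem e2_tendsto (f g : ℕ → ℝ) (b c : ℝ) (hf : Tendsto f atTop (nhds b))
    (hg : Tendsto g atTop (nhds c)) :
    Tendsto (fun n => (!₂[f n, g n] : E2)) atTop (nhds (!₂[b, c] : E2)) := by
  have h : Continuous (fun v : Fin 2 → ℝ => (WithLp.toLp 2 v : E2)) :=
    PiLp.continuous_toLp 2 _
  refine (h.tendsto ![b, c]).comp ?_
  rw [tendsto_pi_nhds]
  intro i
  fin_cases i
  · simpa using hf
  · simpa using hg

theorem e2_norm_le {p q b c d e : ℝ}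
    (h : ‖(!₂[p, q] : E2) - !₂[b, c]‖ ≤ ‖(!₂[p, q] : E2) - !₂[d, e]‖) :
    (p - b) ^ 2 + (q - c) ^ 2 ≤ (p - d) ^ 2 + (q - e) ^ 2 := by
  have h2 := pow_le_pow_left₀ (norm_nonneg _) h 2
  simpa [EuclideanSpace.norm_sq_eq, Fin.sum_univ_two] using h2

theorem dr_step (η γ p b : ℝ) (h0 : 0 < η) (h1 : η ≤ 1) (hγ : 0 < γ) (hγ' : γ < 3 / 5)
    (hp : 7 ≤ p) (hp' : p ≤ 7 + η) (hb : 1 ≤ b) (x y z x' : E2)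
    (hx : x = !₂[p, b * η])
    (hy : y = (1 / (1 + γ)) • (x + γ • (!₂[x 0, 0] : E2)))
    (hz : z ∈ ({!₂[0, 0], !₂[7 + η, η], !₂[7, -η]} : Set E2))
    (hzm : ∀ w ∈ ({!₂[0, 0], !₂[7 + η, η], !₂[7, -η]} : Set E2),
      ‖(2 : ℝ) • y - x - z‖ ≤ ‖(2 : ℝ) • y - x - w‖)
    (hx' : x' = x + (z - y)) :
    y = !₂[p, b / (1 + γ) * η] ∧ z = !₂[7 + η, η] ∧
      x' = !₂[7 + η, (γ / (1 + γ) * b + 1) * η] := by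
  have hg : (1 + γ) ≠ 0 := by positivity
  have hy2 : y = !₂[p, b / (1 + γ) * η] := by
    rw [hy, hx]
    ext i
    fin_cases i
    · simp; field_simp
    · simp; field_simp
  obtain ⟨s, hs⟩ : ∃ s, s = b * ((1 - γ) / (1 + γ)) := ⟨_, rfl⟩
  have hu : (2 : ℝ) • y - x = !₂[p, s * η] := by
    rw [hy2, hx, hs]
    ext i
    fin_cases i
    · simp; ring
    · simp; field_simp; ring
  have hr : 1 / 4 < (1 - γ) / (1 + γ) := by
    rw [div_lt_div_iff₀ (by norm_num) (by positivity)]; linarith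
  have hs4 : 1 / 4 < s := by rw [hs]; nlinarith
  rw [hu] at hzm
  have hm := hzm !₂[7 + η, η] (by simp)
  have hz2 : z = !₂[7 + η, η] := by
    rcases hz with h | h | h
    · rw [h] at hm
      have := e2_norm_le hm
      nlinarith [mul_pos h0 h0]
    · exact h
    · rw [Set.mem_singleton_iff] at h
      rw [h] at hm
      have := e2_norm_le hm
      nlinarith [mul_pos h0 h0, mul_nonneg h0.le (sub_nonneg.2 hp), mul_pos (mul_pos h0 h0) (sub_pos.2 hs4)]
  refine ⟨hy2, hz2, ?_⟩
  rw [hx', hz2, hy2, hx]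
  ext i
  fin_cases i
  · simp
  · simp; field_simp; ring

theorem stmt18 (η : ℝ) (hη : η ∈ Set.Ioc (0 : ℝ) 1)
    (γ : ℝ) (hγ : 0 < γ) (hγ' : γ < Real.sqrt (3 / 2) - 1)
    (C D : Set (EuclideanSpace ℝ (Fin 2)))
    (hC : C = {p : EuclideanSpace ℝ (Fin 2) | p 1 = 0})
    (hD : D = {(!₂[0, 0] : EuclideanSpace ℝ (Fin 2)),
               (!₂[7 + η, η] : EuclideanSpace ℝ (Fin 2)),
               (!₂[7, -η] : EuclideanSpace ℝ (Fin 2))})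
    (pC : EuclideanSpace ℝ (Fin 2) → EuclideanSpace ℝ (Fin 2))
    (hpC : ∀ w, pC w = (!₂[w 0, 0] : EuclideanSpace ℝ (Fin 2)))
    (x y z : ℕ → EuclideanSpace ℝ (Fin 2))
    (hx0 : x 0 = (!₂[7, η] : EuclideanSpace ℝ (Fin 2)))
    (hy : ∀ t, y (t + 1) = (1 / (1 + γ)) • (x t + γ • pC (x t)))
    (hz : ∀ t, z (t + 1) ∈ D ∧
      ∀ w ∈ D, ‖(2 : ℝ) • y (t + 1) - x t - z (t + 1)‖ ≤ ‖(2 : ℝ) • y (t + 1) - x t - w‖)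
    (hx : ∀ t, x (t + 1) = x t + (z (t + 1) - y (t + 1)))
    (a : ℕ → ℝ) (ha1 : a 1 = 2 - 1 / (1 + γ))
    (harec : ∀ t, 1 ≤ t → a (t + 1) = γ / (1 + γ) * a t + 1) :
    (∀ t, 1 ≤ t →
      y (t + 1) = (!₂[7 + η, a t / (1 + γ) * η] : EuclideanSpace ℝ (Fin 2)) ∧
      z (t + 1) = (!₂[7 + η, η] : EuclideanSpace ℝ (Fin 2)) ∧
      x (t + 1) = (!₂[7 + η, a (t + 1) * η] : EuclideanSpace ℝ (Fin 2))) ∧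
    Tendsto y atTop (nhds (!₂[7 + η, η] : EuclideanSpace ℝ (Fin 2))) ∧
    Tendsto z atTop (nhds (!₂[7 + η, η] : EuclideanSpace ℝ (Fin 2))) ∧
    Tendsto x atTop (nhds (!₂[7 + η, (1 + γ) * η] : EuclideanSpace ℝ (Fin 2))) := by
  obtain ⟨h0, h1⟩ := hη
  subst hD
  have hγ3 : γ < 3 / 5 := by
    have : Real.sqrt (3 / 2) < 8 / 5 := by
      rw [Real.sqrt_lt' (by norm_num)]; norm_num
    linarith
  have hg : (1 + γ) ≠ 0 := by positivity
  have step := fun t p b hp hp' hb hxt => dr_step η γ p b h0 h1 hγ hγ3 hp hp' hb (x t) (y (t+1))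
    (z (t+1)) (x (t+1)) hxt (by rw [hy, hpC]) (hz t).1 (hz t).2 (hx t)
  have hxa : ∀ t, 1 ≤ a (t + 1) ∧ x (t + 1) = !₂[7 + η, a (t + 1) * η] := by
    intro t
    induction t with
    | zero =>
      have h := (step 0 7 1 le_rfl (by linarith) le_rfl (by rw [hx0, one_mul])).2.2
      have e : a (0 + 1) = γ / (1 + γ) * 1 + 1 := by
        rw [zero_add, ha1]; field_simp; ring
      rw [e]
      refine ⟨?_, h⟩
      have : 0 < γ / (1 + γ) := by positivity
      linarith
    | succ t ih =>
      have h := (step (t+1) _ _ (by linarith) le_rfl ih.1 ih.2).2.2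
      rw [harec (t+1) (by omega)]
      refine ⟨?_, h⟩
      have : 0 < γ / (1 + γ) := by positivity
      nlinarith [ih.1]
  have main : ∀ t, 1 ≤ t →
      y (t + 1) = (!₂[7 + η, a t / (1 + γ) * η] : EuclideanSpace ℝ (Fin 2)) ∧
      z (t + 1) = (!₂[7 + η, η] : EuclideanSpace ℝ (Fin 2)) ∧
      x (t + 1) = (!₂[7 + η, a (t + 1) * η] : EuclideanSpace ℝ (Fin 2)) := by
    intro t ht
    obtain ⟨t, rfl⟩ := Nat.exists_eq_add_of_le' ht
    rw [harec (t+1) ht]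
    exact step (t+1) _ _ (by linarith) le_rfl (hxa t).1 (hxa t).2
  have hform : ∀ t, a (t + 1) = (γ / (1 + γ)) ^ t * (a 1 - (1 + γ)) + (1 + γ) := by
    intro t
    induction t with
    | zero => simp
    | succ t ih =>
      rw [harec (t+1) (by omega), ih, pow_succ]; field_simp; ring
  have hlim : Tendsto (fun t => a (t + 1)) atTop (nhds (1 + γ)) := by
    have hq : Tendsto (fun t : ℕ => (γ / (1 + γ)) ^ t) atTop (nhds 0) :=
      tendsto_pow_atTop_nhds_zero_of_lt_one (by positivity)
        (by rw [div_lt_one (by positivity)]; linarith)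
    have := (hq.mul_const (a 1 - (1 + γ))).add_const (1 + γ)
    simp only [zero_mul, zero_add] at this
    exact this.congr (fun t => (hform t).symm)
  refine ⟨main, ?_, ?_, ?_⟩
  · rw [← tendsto_add_atTop_iff_nat 2]
    have := e2_tendsto (fun _ => 7 + η) (fun t => a (t+1) / (1 + γ) * η) _ _ tendsto_const_nhds
      ((hlim.div_const (1 + γ)).mul_const η)
    rw [div_self hg, one_mul] at this
    exact this.congr (fun t => (main (t+1) (by omega)).1.symm)
  · rw [← tendsto_add_atTop_iff_nat 2]
    exact tendsto_const_nhds.congr (fun t => (main (t+1) (by omega)).2.1.symm)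
  · rw [← tendsto_add_atTop_iff_nat 1]
    have := e2_tendsto (fun _ => 7 + η) (fun t => a (t+1) * η) _ _ tendsto_const_nhds
      (hlim.mul_const η)
    exact this.congr (fun t => (hxa t).2.symm)
end
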